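/- Instantaneous γ-regret bound for the hardest model in the Example. Fix integers d, K ≥ 1, T ≥ 1, and γ ∈ (0,1] with K ≤ 20T, K ≥ 6000/γ², and T ≤ exp(d/8). Let p be any probability distribution on Π, let w̃ ∈ {−1,1}^d minimize E_{(π',π)∼p}[1(⟨w,π'⟩ ≥ d/2)] over w, and let k̃ ∈ {1,…,K} minimize E_{(π',π)∼p}[1(π = k)] over k. Then E_{(π',π)∼p}[γ·1 − f_{w̃,k̃}(π',π)] ≥ (γ/2)·√(K/(20T)). -/

import Mathlib

open MeasureTheory

noncomputable section

def sgn (b : Bool) : ℝ := if b then 1 else -1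

/-- Inner product of two sign vectors in `{−1,1}^d`, encoded by `Fin d → Bool`. -/
def ip {d : ℕ} (w x : Fin d → Bool) : ℝ := ∑ i, sgn (w i) * sgn (x i)

/-- The action set `({−1,1}^d ∪ {⊥}) × [K]`; `none` plays the role of `⊥`. -/
abbrev ExAct (d K : ℕ) := Option (Fin d → Bool) × Fin K

instance (d K : ℕ) : MeasurableSpace (ExAct d K) := ⊤

/-- `h_w(π') = (2/d)·max(0, ⟨π',w⟩ − d/2)` with `h_w(⊥) = 0`. -/
def hfun {d : ℕ} (w : Fin d → Bool) : Option (Fin d → Bool) → ℝ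
  | none => 0
  | some x => (2 / (d:ℝ)) * max 0 (ip x w - d/2)

/-- Mean reward of the model `(w,k)` of the subclass `M̃`: `v_k = 1` and
`v_j = 1 − √(K/(20T))` for `j ≠ k`. -/
def fEx (d K T : ℕ) (γ : ℝ) (w : Fin d → Bool) (k : Fin K) : ExAct d K → ℝ :=
  fun a => (1 - γ) * hfun w a.1 +
    γ * (if a.2 = k then 1 else 1 - Real.sqrt ((K:ℝ) / (20 * (T:ℝ))))

/-- Indicator of the event `⟨w,π'⟩ ≥ d/2` (interpreted as `0` when `π' = ⊥`). -/
def indW (d K : ℕ) (w : Fin d → Bool) : ExAct d K → ℝ :=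
  fun a => match a.1 with
  | none => 0
  | some x => if (d:ℝ)/2 ≤ ip w x then 1 else 0

/-- Indicator of the event `π = k`. -/
def indK (d K : ℕ) (k : Fin K) : ExAct d K → ℝ :=
  fun a => if a.2 = k then 1 else 0

lemma sgn_cases (b : Bool) : sgn b = 1 ∨ sgn b = -1 := by cases b <;> simp [sgn]

lemma ip_comm' {d : ℕ} (w x : Fin d → Bool) : ip w x = ip x w := by
  unfold ip
  exact Finset.sum_congr rfl (fun i _ => mul_comm _ _)

lemma ip_le {d : ℕ} (w x : Fin d → Bool) : ip w x ≤ d := by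
  unfold ip
  calc ∑ i, sgn (w i) * sgn (x i) ≤ ∑ _i : Fin d, (1:ℝ) := by
        apply Finset.sum_le_sum
        intro i _
        rcases sgn_cases (w i) with h | h <;> rcases sgn_cases (x i) with h' | h' <;>
          rw [h, h'] <;> norm_num
    _ = d := by simp

lemma ex_integrable {d K : ℕ} (p : Measure (ExAct d K)) [IsProbabilityMeasure p]
    (f : ExAct d K → ℝ) : Integrable f p := by
  haveI : MeasurableSingletonClass (ExAct d K) := ⟨fun _ => trivial⟩
  exact Integrable.of_finite

lemma sum_exp_ip {d : ℕ} (x : Fin d → Bool) :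
    ∑ w : Fin d → Bool, Real.exp (ip w x / 2) = (2 * Real.cosh (1/2)) ^ d := by
  have h1 : ∀ w : Fin d → Bool, Real.exp (ip w x / 2)
      = ∏ i, Real.exp (sgn (w i) * sgn (x i) / 2) := by
    intro w
    rw [← Real.exp_sum, ip, Finset.sum_div]
  simp_rw [h1]
  have h2 := Finset.prod_univ_sum (fun _ : Fin d => (Finset.univ : Finset Bool))
    (fun i b => Real.exp (sgn b * sgn (x i) / 2))
  rw [Fintype.piFinset_univ] at h2
  rw [← h2]
  have h3 : ∀ i, ∑ b : Bool, Real.exp (sgn b * sgn (x i) / 2) = 2 * Real.cosh (1/2) := by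
    intro i
    rw [Fintype.sum_bool, Real.cosh_eq]
    rcases sgn_cases (x i) with h | h <;> rw [h] <;> simp [sgn] <;> ring_nf
  rw [Finset.prod_congr rfl (fun i _ => h3 i)]
  simp

lemma sum_indW_le (d K : ℕ) (a : ExAct d K) :
    ∑ w : Fin d → Bool, indW d K w a ≤ 2 ^ d * Real.exp (-(d:ℝ)/8) := by
  rcases a with ⟨_ | x, k⟩
  · simp only [indW, Finset.sum_const_zero]; positivity
  · have hb : ∀ w : Fin d → Bool, indW d K w (some x, k)
        ≤ Real.exp (-(d:ℝ)/4) * Real.exp (ip w x / 2) := by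
      intro w
      simp only [indW]
      rw [← Real.exp_add]
      split_ifs with h
      · apply Real.one_le_exp; linarith
      · positivity
    calc ∑ w : Fin d → Bool, indW d K w (some x, k)
        ≤ ∑ w : Fin d → Bool, Real.exp (-(d:ℝ)/4) * Real.exp (ip w x / 2) :=
          Finset.sum_le_sum (fun w _ => hb w)
      _ = Real.exp (-(d:ℝ)/4) * (2 * Real.cosh (1/2)) ^ d := by
          rw [← Finset.mul_sum, sum_exp_ip]
      _ ≤ Real.exp (-(d:ℝ)/4) * (2 * Real.exp ((1/2)^2/2)) ^ d := by
          have := Real.cosh_le_exp_half_sq (1/2)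
          have h0 := Real.cosh_pos (1/2)
          gcongr
      _ = 2 ^ d * Real.exp (-(d:ℝ)/8) := by
          rw [mul_pow, ← Real.exp_nat_mul, mul_left_comm, ← Real.exp_add]
          congr 2; ring

lemma indW_min_le (d K : ℕ) (p : Measure (ExAct d K)) [IsProbabilityMeasure p]
    (wt : Fin d → Bool)
    (hwt : ∀ w : Fin d → Bool, ∫ a, indW d K wt a ∂p ≤ ∫ a, indW d K w a ∂p) :
    ∫ a, indW d K wt a ∂p ≤ Real.exp (-(d:ℝ)/8) := by
  have h1 : 2 ^ d * ∫ a, indW d K wt a ∂p ≤ ∑ w : Fin d → Bool, ∫ a, indW d K w a ∂p := by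
    have := Finset.sum_le_sum (s := Finset.univ) (fun w _ => hwt w)
    simpa using this
  rw [← integral_finsetSum _ (fun w _ => ex_integrable p _)] at h1
  have h2 : ∫ a, ∑ w : Fin d → Bool, indW d K w a ∂p
      ≤ ∫ _a, 2 ^ d * Real.exp (-(d:ℝ)/8) ∂p :=
    integral_mono (ex_integrable p _) (ex_integrable p _) (sum_indW_le d K)
  rw [integral_const] at h2
  simp only [probReal_univ, one_smul] at h2
  exact le_of_mul_le_mul_left (h1.trans h2) (by positivity)

lemma indK_min_le (d K : ℕ) (p : Measure (ExAct d K)) [IsProbabilityMeasure p]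
    (kt : Fin K)
    (hkt : ∀ k : Fin K, ∫ a, indK d K kt a ∂p ≤ ∫ a, indK d K k a ∂p) :
    K * ∫ a, indK d K kt a ∂p ≤ 1 := by
  have h1 : K * ∫ a, indK d K kt a ∂p ≤ ∑ k : Fin K, ∫ a, indK d K k a ∂p := by
    have := Finset.sum_le_sum (s := Finset.univ) (fun w _ => hkt w)
    simpa using this
  rw [← integral_finsetSum _ (fun w _ => ex_integrable p _)] at h1
  simpa [indK] using h1

lemma indW_nonneg (d K : ℕ) (w : Fin d → Bool) (a : ExAct d K) : 0 ≤ indW d K w a := by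
  rcases a with ⟨_ | x, k⟩
  · simp [indW]
  · simp only [indW]; split_ifs <;> norm_num

lemma hfun_le (d K : ℕ) (hd : 1 ≤ d) (w : Fin d → Bool) (a : ExAct d K) :
    hfun w a.1 ≤ indW d K w a := by
  have hd' : (0:ℝ) < d := by exact_mod_cast hd
  rcases a with ⟨_ | x, k⟩
  · simp [indW, hfun]
  · simp only [indW, hfun]
    rw [ip_comm' w x]
    have := ip_le x w
    split_ifs with h
    · rw [max_eq_right (by linarith), div_mul_eq_mul_div, div_le_one hd']
      linarith
    · rw [max_eq_left (by linarith)]; simp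

/-- **Instantaneous γ-regret bound for the hardest model in the Example.** If `w̃`
minimizes `E_p[1(⟨w,π'⟩ ≥ d/2)]` and `k̃` minimizes `E_p[1(π = k)]`, then
`E_p[γ·1 − f_{w̃,k̃}] ≥ (γ/2)√(K/(20T))`. -/
theorem example_instantaneous_regret_bound (d K T : ℕ)
    (hd : 1 ≤ d) (hK : 1 ≤ K) (hT : 1 ≤ T)
    (hKT : (K:ℝ) ≤ 20 * (T:ℝ))
    (γ : ℝ) (hγ : γ ∈ Set.Ioc (0:ℝ) 1)
    (hKγ : 6000 / γ^2 ≤ (K:ℝ))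
    (hTd : (T:ℝ) ≤ Real.exp ((d:ℝ)/8))
    (p : Measure (ExAct d K)) (hp : IsProbabilityMeasure p)
    (wt : Fin d → Bool)
    (hwt : ∀ w : Fin d → Bool, ∫ a, indW d K wt a ∂p ≤ ∫ a, indW d K w a ∂p)
    (kt : Fin K)
    (hkt : ∀ k : Fin K, ∫ a, indK d K kt a ∂p ≤ ∫ a, indK d K k a ∂p) :
    (γ/2) * Real.sqrt ((K:ℝ) / (20 * (T:ℝ))) ≤
      ∫ a, (γ * 1 - fEx d K T γ wt kt a) ∂p := by
  obtain ⟨hγ0, hγ1⟩ := hγ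
  have hT' : (1:ℝ) ≤ T := by exact_mod_cast hT
  have hW := indW_min_le d K p wt hwt
  have hKK := indK_min_le d K p kt hkt
  set s := Real.sqrt ((K:ℝ) / (20 * (T:ℝ))) with hs
  have hs0 : 0 ≤ s := Real.sqrt_nonneg _
  set W := ∫ a, indW d K wt a ∂p with hWdef
  set P := ∫ a, indK d K kt a ∂p with hPdef
  have hW0 : 0 ≤ W := integral_nonneg (indW_nonneg d K wt)
  have hWT : W * T ≤ 1 := by
    calc W * T ≤ Real.exp (-(d:ℝ)/8) * Real.exp ((d:ℝ)/8) := by gcongr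
      _ = 1 := by rw [← Real.exp_add]; simp [neg_div]
  have hpt : ∀ a, γ * s * (1 - indK d K kt a) - (1 - γ) * indW d K wt a
      ≤ γ * 1 - fEx d K T γ wt kt a := by
    intro a
    have h1 := mul_le_mul_of_nonneg_left (hfun_le d K hd wt a) (sub_nonneg.2 hγ1)
    simp only [fEx, indK, ← hs]
    split_ifs <;> linarith
  have hint : γ * s * (1 - P) - (1 - γ) * W ≤ ∫ a, (γ * 1 - fEx d K T γ wt kt a) ∂p := by
    refine le_trans (le_of_eq ?_) (integral_mono (ex_integrable p _) (ex_integrable p _) hpt)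
    rw [integral_sub (ex_integrable p _) (ex_integrable p _), integral_const_mul,
      integral_const_mul, integral_sub (ex_integrable p _) (ex_integrable p _)]
    simp [hPdef, hWdef]
  refine le_trans ?_ hint
  have hKγ2 : 6000 ≤ (K:ℝ) * γ^2 := by
    rwa [div_le_iff₀ (by positivity)] at hKγ
  have hK6 : (6000:ℝ) ≤ K := by
    have : (K:ℝ) * γ^2 ≤ K * 1 := by
      gcongr
      nlinarith
    linarith
  have hP : P ≤ 1/4 := by
    by_contra h
    push Not at h
    nlinarith
  have hs2 : s^2 * (20 * T) = K := by
    rw [hs, Real.sq_sqrt (by positivity)]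
    field_simp
  have hgs : 4 ≤ γ * s * T := by
    have h4 : (4:ℝ)^2 ≤ (γ * s * T)^2 := by
      have : (γ * s * T)^2 = (K * γ^2) * T / 20 := by rw [← hs2]; ring
      rw [this]
      nlinarith
    exact (sq_le_sq₀ (by norm_num) (by positivity)).1 h4
  have hWs : 4 * W ≤ γ * s := by
    have : 4 * W * T ≤ γ * s * T := by linarith
    exact le_of_mul_le_mul_right this (by linarith)
  have hγs : 0 ≤ γ * s := by positivity
  nlinarith

end
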